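/- For every mad family 𝒜 on ω, the filter F(𝒜) is a completely meager P⁺-filter. -/

import Mathlib

open Set Filter

/-- The characteristic function of a set, viewing `𝒫(α)` inside the Cantor space `α → Bool`. -/
noncomputable def chi {α : Type*} (X : Set α) : α → Bool :=
  fun n => @decide (n ∈ X) (Classical.propDecidable _)

/-- A family of subsets of `α` viewed as a subset of the Cantor space `α → Bool`. -/
noncomputable def toCantor {α : Type*} (A : Set (Set α)) : Set (α → Bool) := chi '' A

/-- A family of subsets of `α` is meager if it is meager as a subset of the Cantor space. -/
def MeagerFamily {α : Type*} (A : Set (Set α)) : Prop := IsMeagre (toCantor A)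

/-- A family of subsets of `α` has the Baire property if, viewed in the Cantor space,
it differs from an open set by a meager set. -/
def HasBP {α : Type*} (A : Set (Set α)) : Prop :=
  ∃ U : Set (α → Bool), IsOpen U ∧ IsMeagre (symmDiff (toCantor A) U)

/-- `A` has the Baire property relative to `C ⊆ 2^α`: the trace of `A` on `C` differs from a
relatively open subset of `C` by a set meager in `C`. -/
def RelBP {α : Type*} (A : Set (Set α)) (C : Set (α → Bool)) : Prop :=
  ∃ O : Set C, IsOpen O ∧ IsMeagre (symmDiff (Subtype.val ⁻¹' (toCantor A)) O)

/-- Talagrand's strong Baire property: the filter has the Baire property relative to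
every closed subset of the Cantor space. -/
def StrongBP {α : Type*} (F : Filter α) : Prop :=
  ∀ C : Set (α → Bool), IsClosed C → RelBP F.sets C

/-- `F⁺`: the sets whose complement is not in `F`, i.e. the sets compatible with `F`. -/
def Fplus {α : Type*} (F : Filter α) : Set (Set α) := {X | Xᶜ ∉ F}

/-- `F` is completely meager if for every `X ∈ F⁺` the filter generated by `F ∪ {X}` is meager. -/
def CompletelyMeager {α : Type*} (F : Filter α) : Prop :=
  ∀ X ∈ Fplus F, MeagerFamily (F ⊓ 𝓟 X).sets

/-- `F` is weakly hereditarily meager if for every `f`, either some fiber `f⁻¹(i)` is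
compatible with `F`, or the image filter `f(F)` is meager. -/
def WeaklyHereditarilyMeager {α : Type*} (F : Filter α) : Prop :=
  ∀ f : α → ℕ, (∃ i : ℕ, f ⁻¹' {i} ∈ Fplus F) ∨ MeagerFamily (Filter.map f F).sets

/-- `F` is hereditarily meager if for every `f`, the image filter `f(F)` either contains
a finite set (is improper) or is meager. -/
def HereditarilyMeager {α : Type*} (F : Filter α) : Prop :=
  ∀ f : α → ℕ, (∃ Y ∈ Filter.map f F, Y.Finite) ∨ MeagerFamily (Filter.map f F).sets

/-- `F` is a P⁺-filter: every ⊆*-decreasing sequence from `F⁺` has a pseudo-intersection in `F⁺`. -/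
def PPlusFilter {α : Type*} (F : Filter α) : Prop :=
  ∀ X : ℕ → Set α, (∀ n, X n ∈ Fplus F) → (∀ n, (X (n + 1) \ X n).Finite) →
    ∃ Y ∈ Fplus F, ∀ n, (Y \ X n).Finite

/-- `F` is a strong P⁺-filter: for every sequence from `F⁺` there is `f : ω → ω` such that
every `Y ∈ F` meets `Xₙ ∩ [0, f(n))` for all but finitely many `n`. -/
def StrongPPlusFilter (F : Filter ℕ) : Prop :=
  ∀ X : ℕ → Set ℕ, (∀ n, X n ∈ Fplus F) →
    ∃ f : ℕ → ℕ, ∀ Y ∈ F, ∀ᶠ n in Filter.atTop, (Y ∩ X n ∩ Set.Iio (f n)).Nonempty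

/-- `F` is an Fσ filter: as a subset of Cantor space it is a countable union of closed sets. -/
def IsFsigmaFilter (F : Filter ℕ) : Prop :=
  ∃ C : ℕ → Set (ℕ → Bool), (∀ n, IsClosed (C n)) ∧ toCantor F.sets = ⋃ n, C n

/-- An almost disjoint family: an infinite family of infinite sets with pairwise finite
intersections. -/
def ADFamily (𝒜 : Set (Set ℕ)) : Prop :=
  𝒜.Infinite ∧ (∀ A ∈ 𝒜, A.Infinite) ∧
    ∀ A ∈ 𝒜, ∀ B ∈ 𝒜, A ≠ B → (A ∩ B).Finite

/-- A maximal almost disjoint family. -/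
def MadFamily (𝒜 : Set (Set ℕ)) : Prop :=
  ADFamily 𝒜 ∧ ∀ X : Set ℕ, X.Infinite → ∃ A ∈ 𝒜, (X ∩ A).Infinite

/-- `F(𝒜)`: the filter generated by the complements of members of `𝒜` and the cofinite sets. -/
def madFilter (𝒜 : Set (Set ℕ)) : Filter ℕ :=
  Filter.cofinite ⊓ ⨅ A ∈ 𝒜, 𝓟 Aᶜ

/-- `I(𝒜)`: the ideal generated by `𝒜`, i.e. sets covered by finitely many members of `𝒜`
together with a finite set. -/
def madIdeal (𝒜 : Set (Set ℕ)) : Set (Set ℕ) :=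
  {X | ∃ s : Finset (Set ℕ), ↑s ⊆ 𝒜 ∧ (X \ ⋃ A ∈ s, (A : Set ℕ)).Finite}

/-- The Fubini product `F ⊗ G` of two filters. -/
def tensor {α β : Type*} (F : Filter α) (G : Filter β) : Filter (α × β) where
  sets := {X | {n | {m | (n, m) ∈ X} ∈ G} ∈ F}
  univ_sets := by simp
  sets_of_superset := by
    intro X Y hX hXY
    simp only [Set.mem_setOf_eq] at *
    filter_upwards [hX] with n hn
    filter_upwards [hn] with m hm
    exact hXY hm
  inter_sets := by
    intro X Y hX hY
    simp only [Set.mem_setOf_eq] at *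
    filter_upwards [hX, hY] with n h1 h2
    filter_upwards [h1, h2] with m hm1 hm2
    exact ⟨hm1, hm2⟩

/-- A dominating family of functions. -/
def Dominating (D : Set (ℕ → ℕ)) : Prop :=
  ∀ g : ℕ → ℕ, ∃ f ∈ D, ∀ᶠ n in Filter.atTop, g n ≤ f n

/-- The dominating number `𝔡`. -/
noncomputable def frakD : Cardinal :=
  sInf {c : Cardinal | ∃ D : Set (ℕ → ℕ), Dominating D ∧ Cardinal.mk D = c}

/-!
Almost inclusion `X ⊆* Y` is encoded as `X ≤ᶠ[cofinite] Y`. Call a sequence `B` of infinite sets a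
π-base of `F` if for every `Y` in `F` there is `k` with `B k ⊆* Y`. A filter with a π-base is
meager, since it is covered by the countably many meager families `{Y | B k ⊆* Y}`. Moreover, if
every `B k` is almost contained in `X`, then `B` is still a π-base of `⟨F ∪ {X}⟩`. Finally, if
`B k ⊆* X n` for all `k` and `n`, then a diagonal union of the `B k` is a pseudo-intersection of the
`X n`, and it lies in `F⁺` because it almost contains every `B k`.

So it suffices to find, below any `⊆*`-decreasing sequence `X` in `F(𝒜)⁺`, a π-base of `F(𝒜)`.
Infinitely many members of `𝒜` contain an infinite pseudo-intersection of `X`: otherwise remove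
these finitely many members from every `X n`, take an infinite pseudo-intersection of what is left,
and note that by maximality it has infinite intersection with a further member of `𝒜`.
Any infinite sequence of such pseudo-intersections, taken inside distinct members of `𝒜`, is a
π-base of `F(𝒜)`, because a member of `F(𝒜)` almost contains all but finitely many members of `𝒜`.
-/

section EventuallyLE

variable {α : Type*}

lemma finite_diff_iff_eventuallyLE {X Y : Set α} : (X \ Y).Finite ↔ X ≤ᶠ[cofinite] Y := by
  rw [← compl_compl (X \ Y), ← mem_cofinite]
  exact eventually_congr (Eventually.of_forall fun x => not_and_not_right)

lemma isCountablyGenerated_cofinite [Countable α] :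
    (cofinite : Filter α).IsCountablyGenerated :=
  HasCountableBasis.isCountablyGenerated ⟨hasBasis_cofinite, Countable.ofPred_finite⟩

lemma exists_infinite_forall_eventuallyLE [Countable α] {X : ℕ → Set α}
    (hinf : ∀ n, (X n).Infinite) (hdec : ∀ n, X (n + 1) ≤ᶠ[cofinite] X n) :
    ∃ Y : Set α, Y.Infinite ∧ ∀ n, Y ≤ᶠ[cofinite] X n := by
  let G : ℕ → Filter α := fun n => cofinite ⊓ 𝓟 (X n)
  have hG : Antitone G :=
    antitone_nat_of_succ_le fun n => set_eventuallyLE_iff_inf_principal_le.1 (hdec n)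
  have : ∀ n, (G n).NeBot := fun n => (hinf n).cofinite_inf_principal_neBot
  have : (⨅ n, G n).NeBot := iInf_neBot_of_directed' hG.directed_ge this
  have : (cofinite : Filter α).IsCountablyGenerated := isCountablyGenerated_cofinite
  have : ∀ n, (G n).IsCountablyGenerated := fun n => Inf.isCountablyGenerated _ _
  obtain ⟨y, hy⟩ := exists_seq_tendsto (⨅ n, G n)
  have hyG : ∀ n, Tendsto y atTop (G n) := fun n => hy.mono_right (iInf_le G n)
  refine ⟨range y, fun hfin => ?_, fun n => finite_diff_iff_eventuallyLE.1 ?_⟩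
  · obtain ⟨m, hm⟩ :=
      ((tendsto_inf.1 (hyG 0)).1.eventually hfin.compl_mem_cofinite).exists
    exact hm (mem_range_self m)
  · have hyX : ∀ᶠ m in atTop, y m ∈ X n := tendsto_principal.1 (tendsto_inf.1 (hyG n)).2
    rw [← Nat.cofinite_eq_atTop, eventually_cofinite] at hyX
    refine (hyX.image y).subset ?_
    rintro _ ⟨⟨m, rfl⟩, hm⟩
    exact mem_image_of_mem y hm

lemma exists_between_of_forall_eventuallyLE {B X : ℕ → Set α} (h : ∀ k n, B k ≤ᶠ[cofinite] X n) :
    ∃ Y : Set α, (∀ k, B k ≤ᶠ[cofinite] Y) ∧ ∀ n, Y ≤ᶠ[cofinite] X n := by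
  refine ⟨⋃ k, B k ∩ ⋂ n ∈ Iic k, X n, fun k => ?_, fun n => ?_⟩
  · have hk : ∀ᶠ x in cofinite, ∀ n ∈ Iic k, x ∈ B k → x ∈ X n :=
      (eventually_all_finite (finite_Iic k)).2 fun n _ => h k n
    filter_upwards [hk] with x hx hxB
    exact mem_iUnion.2 ⟨k, hxB, mem_iInter₂.2 fun n hn => hx n hn hxB⟩
  · have hn : ∀ᶠ x in cofinite, ∀ k ∈ Iio n, x ∈ B k → x ∈ X n :=
      (eventually_all_finite (finite_Iio n)).2 fun k _ => h k n
    filter_upwards [hn] with x hx hxY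
    obtain ⟨k, hxB, hxX⟩ := mem_iUnion.1 hxY
    rcases lt_or_ge k n with hkn | hnk
    · exact hx k hkn hxB
    · exact mem_iInter₂.1 hxX n hnk

end EventuallyLE

section Meager

variable {α : Type*}

lemma isNowhereDense_setOf_forall_eq_true {B : Set α} (hB : B.Infinite) :
    IsNowhereDense {f : α → Bool | ∀ x ∈ B, f x = true} := by
  classical
  have hclosed : IsClosed {f : α → Bool | ∀ x ∈ B, f x = true} :=
    isClosed_set_pi fun _ _ => isClosed_singleton (x := true)
  rw [hclosed.isNowhereDense_iff, eq_empty_iff_forall_notMem]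
  intro f hf
  have hupdate : Tendsto (fun x => Function.update f x false) cofinite (nhds f) := by
    refine tendsto_pi_nhds.2 fun i => tendsto_const_nhds.congr' ?_
    filter_upwards [(finite_singleton i).compl_mem_cofinite] with x hx
    exact (Function.update_of_ne (Ne.symm hx) _ _).symm
  obtain ⟨x, hxB, hx⟩ := ((frequently_cofinite_iff_infinite.2 hB).and_eventually
    (hupdate.eventually (mem_interior_iff_mem_nhds.1 hf))).exists
  simpa using hx x hxB

lemma meagerFamily_setOf_eventuallyLE {B : Set α} (hB : B.Infinite) :
    MeagerFamily {Y | B ≤ᶠ[cofinite] Y} := by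
  let e := hB.natEmbedding
  have he : Function.Injective fun n => (e n : α) := Subtype.val_injective.comp e.injective
  have hmeager : IsMeagre
      (⋃ m, {f : α → Bool | ∀ x ∈ (fun n => (e n : α)) '' Ici m, f x = true}) :=
    isMeagre_iUnion fun m => (isNowhereDense_setOf_forall_eq_true
      ((Ici_infinite m).image he.injOn)).isMeagre
  refine hmeager.mono ?_
  rintro _ ⟨Y, hY, rfl⟩
  have heY : ∀ᶠ n in atTop, (e n : α) ∈ Y := by
    filter_upwards [Nat.cofinite_eq_atTop ▸ he.tendsto_cofinite.eventually hY] with n hn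
    exact hn (e n).2
  obtain ⟨m, hm⟩ := eventually_atTop.1 heY
  refine mem_iUnion.2 ⟨m, ?_⟩
  rintro _ ⟨n, hn, rfl⟩
  exact @decide_eq_true _ (Classical.propDecidable _) (hm n hn)

end Meager

section PiBase

variable {α : Type*} {F : Filter α} {B : ℕ → Set α}

/-- A countable π-base of the filter `F`, modulo finite sets: a sequence of infinite sets, not
required to belong to `F`, such that every member of `F` almost contains one of them. -/
structure IsPiBase (F : Filter α) (B : ℕ → Set α) : Prop where
  infinite : ∀ k, (B k).Infinite
  exists_eventuallyLE : ∀ Y ∈ F, ∃ k, B k ≤ᶠ[cofinite] Y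

namespace IsPiBase

theorem meagerFamily (hB : IsPiBase F B) : MeagerFamily F.sets := by
  have hmeager : IsMeagre (⋃ k, toCantor {Y | B k ≤ᶠ[cofinite] Y}) :=
    isMeagre_iUnion fun k => meagerFamily_setOf_eventuallyLE (hB.infinite k)
  refine hmeager.mono ?_
  rintro _ ⟨Y, hY, rfl⟩
  obtain ⟨k, hk⟩ := hB.exists_eventuallyLE Y hY
  exact mem_iUnion.2 ⟨k, mem_image_of_mem chi hk⟩

theorem inf_principal (hB : IsPiBase F B) {X : Set α} (hX : ∀ k, B k ≤ᶠ[cofinite] X) :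
    IsPiBase (F ⊓ 𝓟 X) B where
  infinite := hB.infinite
  exists_eventuallyLE Y hY := by
    obtain ⟨k, hk⟩ := hB.exists_eventuallyLE _ (mem_inf_principal.1 hY)
    refine ⟨k, ?_⟩
    filter_upwards [hk, hX k] with x hxY hxX hxB
    exact hxY hxB (hxX hxB)

theorem mem_Fplus (hB : IsPiBase F B) {Y : Set α} (hY : ∀ k, B k ≤ᶠ[cofinite] Y) : Y ∈ Fplus F := by
  intro hYc
  obtain ⟨k, hk⟩ := hB.exists_eventuallyLE _ hYc
  refine hB.infinite k ?_
  have hempty : ∀ᶠ x in cofinite, x ∉ B k := by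
    filter_upwards [hY k, hk] with x hxY hxYc hxB
    exact hxYc hxB (hxY hxB)
  simpa using eventually_cofinite.1 hempty

end IsPiBase

end PiBase

section Fplus

variable {α : Type*} {F : Filter α} {X Z : Set α}

lemma inter_mem_Fplus (hX : X ∈ Fplus F) (hZ : Z ∈ F) : X ∩ Z ∈ Fplus F := by
  intro h
  refine hX ?_
  filter_upwards [h, hZ] with x hx hxZ hxX
  exact hx ⟨hxX, hxZ⟩

lemma infinite_of_mem_Fplus (hF : F ≤ cofinite) (hX : X ∈ Fplus F) : X.Infinite :=
  fun hfin => hX (hF hfin.compl_mem_cofinite)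

end Fplus

section MadFilter

variable {𝒜 : Set (Set ℕ)}

lemma compl_sUnion_mem_madFilter {S : Set (Set ℕ)} (hS : S.Finite) (hS𝒜 : S ⊆ 𝒜) :
    (⋃₀ S)ᶜ ∈ madFilter 𝒜 := by
  rw [compl_sUnion, sInter_image, biInter_mem hS]
  exact fun A hA => mem_inf_of_right <|
    mem_iInf_of_mem A <| mem_iInf_of_mem (hS𝒜 hA) <| mem_principal_self Aᶜ

lemma eventually_eventuallyLE_of_mem_madFilter
    (had : 𝒜.Pairwise fun A B => (A ∩ B).Finite) {Y : Set ℕ} (hY : Y ∈ madFilter 𝒜) :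
    ∀ᶠ A in cofinite ⊓ 𝓟 𝒜, A ≤ᶠ[cofinite] Y := by
  let G : Filter ℕ := (cofinite ⊓ 𝓟 𝒜).bind fun A => cofinite ⊓ 𝓟 A
  suffices hG : G ≤ madFilter 𝒜 by
    filter_upwards [mem_bind'.1 (hG hY)] with A hA
    exact set_eventuallyLE_iff_mem_inf_principal.2 hA
  refine le_inf (fun Z hZ => ?_) (le_iInf₂ fun C hC => le_principal_iff.2 ?_)
  · exact mem_bind'.2 (Eventually.of_forall fun A => mem_inf_of_left hZ)
  · have hne : ∀ᶠ A in cofinite ⊓ 𝓟 𝒜, A ≠ C :=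
      mem_inf_of_left (finite_singleton C).compl_mem_cofinite
    have hmem : ∀ᶠ A in cofinite ⊓ 𝓟 𝒜, A ∈ 𝒜 := mem_inf_of_right (mem_principal_self 𝒜)
    refine mem_bind'.2 ?_
    filter_upwards [hne, hmem] with A hAC hA
    refine set_eventuallyLE_iff_mem_inf_principal.1 (finite_diff_iff_eventuallyLE.1 ?_)
    rw [sdiff_compl]
    exact had hA hC hAC

lemma infinite_setOf_exists_infinite_forall_eventuallyLE
    (hmax : ∀ X : Set ℕ, X.Infinite → ∃ A ∈ 𝒜, (X ∩ A).Infinite) {X : ℕ → Set ℕ}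
    (hX : ∀ n, X n ∈ Fplus (madFilter 𝒜)) (hdec : ∀ n, X (n + 1) ≤ᶠ[cofinite] X n) :
    {A ∈ 𝒜 | ∃ B ⊆ A, B.Infinite ∧ ∀ n, B ≤ᶠ[cofinite] X n}.Infinite := by
  set S := {A ∈ 𝒜 | ∃ B ⊆ A, B.Infinite ∧ ∀ n, B ≤ᶠ[cofinite] X n}
  intro hS
  have hcompl : (⋃₀ S)ᶜ ∈ madFilter 𝒜 := compl_sUnion_mem_madFilter hS (sep_subset _ _)
  obtain ⟨Y, hYinf, hY⟩ := exists_infinite_forall_eventuallyLE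
    (fun n => infinite_of_mem_Fplus inf_le_left (inter_mem_Fplus (hX n) hcompl))
    (fun n => (hdec n).inter EventuallyLE.rfl)
  obtain ⟨A, hA, hYA⟩ := hmax Y hYinf
  have hYX : ∀ n, Y ≤ᶠ[cofinite] X n := fun n => (hY n).trans inter_subset_left.eventuallyLE
  have hAS : A ∈ S :=
    ⟨hA, Y ∩ A, inter_subset_right, hYA, fun n => inter_subset_left.eventuallyLE.trans (hYX n)⟩
  refine hYA ((finite_diff_iff_eventuallyLE.2 (hY 0)).subset ?_)
  exact fun x ⟨hxY, hxA⟩ => ⟨hxY, fun hx => hx.2 ⟨A, hAS, hxA⟩⟩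

theorem exists_isPiBase_madFilter (h : MadFamily 𝒜) {X : ℕ → Set ℕ}
    (hX : ∀ n, X n ∈ Fplus (madFilter 𝒜)) (hdec : ∀ n, X (n + 1) ≤ᶠ[cofinite] X n) :
    ∃ B : ℕ → Set ℕ, IsPiBase (madFilter 𝒜) B ∧ ∀ k n, B k ≤ᶠ[cofinite] X n := by
  let A := (infinite_setOf_exists_infinite_forall_eventuallyLE h.2 hX hdec).natEmbedding
  choose hA𝒜 B hBA hBinf hBX using fun k => (A k).2
  refine ⟨B, ⟨hBinf, fun Y hY => ?_⟩, hBX⟩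
  have hA : Tendsto (fun k => (A k : Set ℕ)) cofinite (cofinite ⊓ 𝓟 𝒜) :=
    tendsto_inf.2 ⟨(Subtype.val_injective.comp A.injective).tendsto_cofinite,
      tendsto_principal.2 (Eventually.of_forall hA𝒜)⟩
  have had : 𝒜.Pairwise fun C D => (C ∩ D).Finite := fun C hC D hD => h.1.2.2 C hC D hD
  obtain ⟨k, hk⟩ := (hA.eventually (eventually_eventuallyLE_of_mem_madFilter had hY)).exists
  exact ⟨k, (hBA k).eventuallyLE.trans hk⟩

end MadFilter

/-- For every mad family `𝒜` on `ω`, the filter `F(𝒜)` is a completely meager P⁺-filter. -/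
theorem stmt11 (𝒜 : Set (Set ℕ)) (h : MadFamily 𝒜) :
    CompletelyMeager (madFilter 𝒜) ∧ PPlusFilter (madFilter 𝒜) := by
  refine ⟨fun X hX => ?_, fun X hX hdec => ?_⟩
  · obtain ⟨B, hB, hBX⟩ :=
      exists_isPiBase_madFilter h (X := fun _ => X) (fun _ => hX) fun _ => EventuallyLE.rfl
    exact (hB.inf_principal fun k => hBX k 0).meagerFamily
  · obtain ⟨B, hB, hBX⟩ :=
      exists_isPiBase_madFilter h hX fun n => finite_diff_iff_eventuallyLE.1 (hdec n)
    obtain ⟨Y, hBY, hYX⟩ := exists_between_of_forall_eventuallyLE hBX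
    exact ⟨Y, hB.mem_Fplus hBY, fun n => finite_diff_iff_eventuallyLE.2 (hYX n)⟩
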